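/- Let X be a d-dimensional simplicial complex on n vertices, d ≥ 2. Then the torsion subgroup of H_{d-1}(X; ℤ) has order at most (d+1)^{(1/2)·C(n,d)}, i.e., at most √(d+1) raised to the power binomial(n, d). -/

import Mathlib

open Matrix

/-- Cells on vertex set `Fin n` of cardinality `c` (i.e. simplices of dimension `c - 1`). -/
abbrev Cell (n c : ℕ) := {s : Finset (Fin n) // s.card = c}

/-- The simplicial boundary matrix, from chains on cells of cardinality `c+1`
(dimension `c`) to chains on cells of cardinality `c` (dimension `c-1`).
Cardinality `0` cells (the empty set) give the augmentation (reduced homology). -/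
def bmat (R : Type) [CommRing R] (n c : ℕ) : Matrix (Cell n c) (Cell n (c + 1)) R :=
  fun t s => ∑ v ∈ s.1, if s.1.erase v = t.1 then (-1 : R) ^ (s.1.filter (· < v)).card else 0

/-- Cycles of dimension `c` (cardinality `c+1`), for a complex on `[n]` with complete
`(d-1)`-skeleton where `d = c+1`. -/
def cyclesC (R : Type) [CommRing R] (n c : ℕ) : Submodule R (Cell n (c + 1) → R) :=
  LinearMap.ker (bmat R n c).mulVecLin

/-- Boundaries of dimension `c`, for the complex on `[n]` with complete `(d-1)`-skeleton
(`d = c+1`) whose set of `d`-dimensional faces is `F`. -/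
def bdriesC (R : Type) [CommRing R] (n c : ℕ) (F : Finset (Cell n (c + 2))) :
    Submodule R (Cell n (c + 1) → R) :=
  LinearMap.range ((bmat R n (c + 1)).submatrix id (fun f : ↥F => f.1)).mulVecLin

/-- Simplicial homology `H_c(Y; R) = H_{d-1}(Y; R)` (`d = c+1`) of the `d`-dimensional
complex `Y` on `[n]` with complete `(d-1)`-skeleton and `d`-faces `F`. -/
abbrev HomC (R : Type) [CommRing R] (n c : ℕ) (F : Finset (Cell n (c + 2))) :=
  ↥(cyclesC R n c) ⧸ (bdriesC R n c F).comap (cyclesC R n c).subtype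

/-- The `q`-reducing set of the complex with complete `(d-1)`-skeleton and `d`-faces `F`
(`d = c+1`): those `d`-faces whose addition changes `H_{d-1}(·; ℤ/qℤ)`. -/
def qRed (q : ℕ) [Fact q.Prime] (n c : ℕ) (F : Finset (Cell n (c + 2))) :
    Set (Cell n (c + 2)) :=
  {f | Module.finrank (ZMod q) (HomC (ZMod q) n c (insert f F)) ≠
       Module.finrank (ZMod q) (HomC (ZMod q) n c F)}

/-- Cycles of dimension `c` of a general complex with `c`-dimensional faces `G`. -/
def cyclesG (R : Type) [CommRing R] (n c : ℕ) (G : Finset (Cell n (c + 1))) :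
    Submodule R (↥G → R) :=
  LinearMap.ker ((bmat R n c).submatrix id (fun g : ↥G => g.1)).mulVecLin

/-- Boundaries of dimension `c` of a general complex with `c`-dimensional faces `G` and
`(c+1)`-dimensional faces `F`. -/
def bdriesG (R : Type) [CommRing R] (n c : ℕ) (G : Finset (Cell n (c + 1)))
    (F : Finset (Cell n (c + 2))) : Submodule R (↥G → R) :=
  LinearMap.range ((bmat R n (c + 1)).submatrix (fun g : ↥G => g.1) (fun f : ↥F => f.1)).mulVecLin

/-- Simplicial homology `H_c(X; R)` of a general complex `X` with `c`-dimensional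
faces `G` and `(c+1)`-dimensional faces `F`. -/
abbrev HomG (R : Type) [CommRing R] (n c : ℕ) (G : Finset (Cell n (c + 1)))
    (F : Finset (Cell n (c + 2))) :=
  ↥(cyclesG R n c G) ⧸ (bdriesG R n c G F).comap (cyclesG R n c G).subtype

open Module Submodule

/-- **Hadamard's inequality**: the determinant is at most the product of the Euclidean norms of
the rows. -/
theorem abs_det_le_prod_norm_row {ι : Type*} [Fintype ι] [DecidableEq ι] (A : Matrix ι ι ℝ) :
    |A.det| ≤ ∏ i, ‖WithLp.toLp 2 (A i)‖ := by
  let e := Fintype.equivFin ι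
  let b : OrthonormalBasis (Fin (Fintype.card ι)) ℝ (EuclideanSpace ℝ ι) :=
    (EuclideanSpace.basisFun ι ℝ).reindex e
  have : Fact (finrank ℝ (EuclideanSpace ℝ ι) = Fintype.card ι) := ⟨by simp⟩
  let v : Fin (Fintype.card ι) → EuclideanSpace ℝ ι := fun k => WithLp.toLp 2 (A (e.symm k))
  have hdet : b.toBasis.det v = A.det := by
    rw [Basis.det_apply, ← Matrix.det_transpose, ← Matrix.det_submatrix_equiv_self e]
    congr 1
    ext i j
    simp [b, v, Basis.toMatrix_apply]
  have hle := b.toBasis.orientation.abs_volumeForm_apply_le v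
  rw [b.toBasis.orientation.volumeForm_robust' b, hdet] at hle
  exact hle.trans_eq (Fintype.prod_equiv e.symm _ _ fun _ => rfl)

theorem abs_det_le_sqrt_pow {ι : Type*} [Fintype ι] [DecidableEq ι] (w : ι → ι → ℤ) (K : ℕ)
    (hw : ∀ i, ∑ j, w i j ^ 2 ≤ (K : ℤ)) :
    ((Matrix.of w).det.natAbs : ℝ) ≤ √K ^ Fintype.card ι := by
  have hcast : ((Matrix.of w).det.natAbs : ℝ) =
      |((Matrix.of w).map (Int.castRingHom ℝ)).det| := by
    rw [← RingHom.mapMatrix_apply, ← RingHom.map_det, Nat.cast_natAbs, Int.cast_abs]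
    rfl
  rw [hcast]
  refine (abs_det_le_prod_norm_row _).trans ?_
  rw [← Finset.card_univ, ← Finset.prod_const]
  refine Finset.prod_le_prod (fun _ _ => norm_nonneg _) fun i _ => ?_
  rw [EuclideanSpace.norm_eq]
  refine Real.sqrt_le_sqrt ?_
  have := hw i
  rw [← Int.cast_le (R := ℝ)] at this
  simpa using this

theorem det_of_ne_zero_of_linearIndependent {ι : Type*} [Fintype ι] [DecidableEq ι]
    {w : ι → ι → ℤ} (hw : LinearIndependent ℤ w) : (Matrix.of w).det ≠ 0 := by
  intro h
  obtain ⟨v, hv, hvw⟩ := Matrix.exists_vecMul_eq_zero_iff.mpr h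
  refine hv (funext (Fintype.linearIndependent_iff.mp hw v ?_))
  rw [← hvw]
  ext j
  simp [Matrix.vecMul, dotProduct]

/-- The index of a full rank sublattice of `ℤ ^ ι` is the determinant of a basis. -/
theorem card_quotient_span_range {ι : Type*} [Fintype ι] [DecidableEq ι]
    {w : ι → ι → ℤ} (hw : LinearIndependent ℤ w) :
    Nat.card ((ι → ℤ) ⧸ span ℤ (Set.range w)) = (Matrix.of w).det.natAbs := by
  rw [← Submodule.natAbs_det_basis_change (Pi.basisFun ℤ ι) _ (Basis.span hw), Basis.det_apply,
    ← Matrix.det_transpose]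
  congr 2
  ext i j
  simp [Basis.toMatrix_apply, Basis.span_apply]

/-- A finite family of integer vectors of squared length at most `K` admits a full rank sublattice
of `ℤ ^ ι`, spanned by vectors of squared length at most `K`, whose intersection with the
saturation of the span of the family lies in that span. -/
theorem exists_linearIndependent_inter_saturation_le {ι κ : Type*} [Fintype ι] [DecidableEq ι]
    (w : κ → ι → ℤ) (K : ℕ) (hK : 1 ≤ K) (hw : ∀ k, ∑ j, w k j ^ 2 ≤ (K : ℤ)) :
    ∃ u : ι → ι → ℤ, LinearIndependent ℤ u ∧ (∀ i, ∑ j, u i j ^ 2 ≤ (K : ℤ)) ∧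
      ∀ x ∈ span ℤ (Set.range u), ∀ m : ℤ, m ≠ 0 → m • x ∈ span ℤ (Set.range w) →
        x ∈ span ℤ (Set.range w) := by
  let φ : (ι → ℤ) →ₗ[ℤ] (ι → ℚ) := LinearMap.compLeft (Algebra.linearMap ℤ ℚ) ι
  let z : κ ⊕ ι → ι → ℤ := Sum.elim w fun i => Pi.single i 1
  have hz : ∀ s, ∑ j, z s j ^ 2 ≤ (K : ℤ) := by
    rintro (k | i)
    · exact hw k
    · simpa [z, Pi.single_apply] using hK
  let v : κ ⊕ ι → ι → ℚ := φ ∘ z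
  obtain ⟨I, hI, -, hIspan, hIli⟩ := exists_linearIndepOn_extension
    (linearIndepOn_empty ℚ v) (Set.empty_subset (Set.range Sum.inl))
  obtain ⟨J, -, hIJ, hJspan, hJli⟩ := exists_linearIndepOn_extension hIli (Set.subset_univ I)
  have htop : ⊤ ≤ span ℚ (Set.range fun s : J => v s) := by
    rw [← Set.image_eq_range, ← (Pi.basisFun ℚ ι).span_eq, span_le]
    rintro _ ⟨i, rfl⟩
    refine hJspan ⟨Sum.inr i, trivial, ?_⟩
    ext j
    simp [v, z, φ, Pi.single_apply]
  let bJ : Basis J ℚ (ι → ℚ) := Basis.mk hJli htop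
  let e : J ≃ ι := bJ.indexEquiv (Pi.basisFun ℚ ι)
  let b : Basis ι ℚ (ι → ℚ) := bJ.reindex e
  let u : ι → ι → ℤ := fun i => z (e.symm i)
  have hb : ∀ i, b i = φ (u i) := fun i => by simp [b, bJ, u, v]
  refine ⟨u, ?_, fun i => hz _, ?_⟩
  · refine LinearIndependent.of_comp φ ?_
    rw [show φ ∘ u = b from (funext hb).symm]
    exact b.linearIndependent.restrict_scalars' ℤ
  · intro x hx m hm hmx
    obtain ⟨a, rfl⟩ := (mem_span_range_iff_exists_fun ℤ).mp hx
    have hmem : ∀ y ∈ span ℤ (Set.range w), φ y ∈ span ℚ (v '' I) := by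
      intro y hy
      induction hy using span_induction with
      | mem y hy =>
        obtain ⟨k, rfl⟩ := hy
        exact hIspan ⟨Sum.inl k, ⟨k, rfl⟩, rfl⟩
      | zero => simp
      | add y y' _ _ hy hy' => rw [map_add]; exact add_mem hy hy'
      | smul r y _ hy => rw [map_smul]; exact zsmul_mem hy r
    have hxI : φ (∑ i, a i • u i) ∈ span ℚ (v '' I) := by
      have := smul_mem _ ((m : ℚ)⁻¹) (hmem _ hmx)
      rwa [map_smul, ← Int.cast_smul_eq_zsmul ℚ, smul_smul, inv_mul_cancel₀ (by exact_mod_cast hm),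
        one_smul] at this
    have himage : v '' I = b '' {i | (e.symm i : κ ⊕ ι) ∈ I} := by
      ext y
      constructor
      · rintro ⟨s, hs, rfl⟩
        exact ⟨e ⟨s, hIJ hs⟩, by simpa using hs, by simp [hb, u, v]⟩
      · rintro ⟨i, hi, rfl⟩
        exact ⟨_, hi, (hb i).symm⟩
    rw [himage, Basis.mem_span_image] at hxI
    have hrepr : ∀ i, b.repr (φ (∑ i, a i • u i)) i = a i := by
      intro i
      have : φ (∑ i, a i • u i) = ∑ i, (a i : ℚ) • b i := by
        simp_rw [map_sum, map_smul, hb, Int.cast_smul_eq_zsmul]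
      rw [this, Basis.repr_sum_self]
    refine sum_mem fun i _ => ?_
    by_cases hai : a i = 0
    · simp [hai]
    · have hi : (e.symm i : κ ⊕ ι) ∈ I := hxI (by
        rw [Finset.mem_coe, Finsupp.mem_support_iff, hrepr]
        exact_mod_cast hai)
      obtain ⟨k, hk⟩ := hI hi
      refine smul_mem _ _ (subset_span ⟨k, ?_⟩)
      simp [u, ← hk, z]

theorem card_torsion_quotient_le {ι κ : Type*} [Fintype ι] [DecidableEq ι]
    (w : κ → ι → ℤ) (K : ℕ) (hK : 1 ≤ K) (hw : ∀ k, ∑ j, w k j ^ 2 ≤ (K : ℤ))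
    (Z : Submodule ℤ (ι → ℤ)) :
    (Nat.card (torsion ℤ (Z ⧸ (span ℤ (Set.range w)).comap Z.subtype)) : ℝ) ≤
      √K ^ Fintype.card ι := by
  obtain ⟨u, hli, hu, hsat⟩ := exists_linearIndependent_inter_saturation_le w K hK hw
  refine le_trans ?_ (abs_det_le_sqrt_pow u K hu)
  rw [← card_quotient_span_range hli, Nat.cast_le]
  have : Finite ((ι → ℤ) ⧸ span ℤ (Set.range u)) := Nat.finite_of_card_ne_zero <| by
    simpa [card_quotient_span_range hli] using det_of_ne_zero_of_linearIndependent hli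
  refine Nat.card_le_card_of_injective
    (fun y => (span ℤ (Set.range u)).mkQ (Submodule.Quotient.mk_surjective _ y.1).choose.1) ?_
  intro y y' h
  set x := (Submodule.Quotient.mk_surjective _ y.1).choose
  set x' := (Submodule.Quotient.mk_surjective _ y'.1).choose
  have hxy : Submodule.Quotient.mk x = y.1 := (Submodule.Quotient.mk_surjective _ y.1).choose_spec
  have hxy' : Submodule.Quotient.mk x' = y'.1 := (Submodule.Quotient.mk_surjective _ y'.1).choose_spec
  obtain ⟨m, hm⟩ := (mem_torsion_iff _).mp (y - y').2
  refine Subtype.ext ?_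
  rw [← hxy, ← hxy', Submodule.Quotient.eq, mem_comap]
  refine hsat _ ?_ m (nonZeroDivisors.ne_zero m.2) ?_
  · exact (Submodule.Quotient.eq _).mp h
  · rw [AddSubgroupClass.coe_sub, ← hxy, ← hxy', ← Submodule.Quotient.mk_sub] at hm
    exact (Submodule.Quotient.mk_eq_zero ((span ℤ (Set.range w)).comap Z.subtype)).mp hm

theorem sum_sq_bmat_le (n c : ℕ) (s : Cell n (c + 1)) :
    ∑ t, bmat ℤ n c t s ^ 2 ≤ (c + 1 : ℕ) := by
  have hsq : ∀ t : Cell n c, bmat ℤ n c t s ^ 2 =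
      ∑ v ∈ s.1, if s.1.erase v = t.1 then 1 else 0 := by
    intro t
    by_cases h : ∃ v ∈ s.1, s.1.erase v = t.1
    · obtain ⟨v, hv, hvt⟩ := h
      have hne : ∀ v' ∈ s.1, v' ≠ v → s.1.erase v' ≠ t.1 := fun v' hv' hvv' h =>
        hvv' (Finset.erase_injOn _ hv' hv (h.trans hvt.symm))
      rw [bmat, Finset.sum_eq_single_of_mem v hv fun v' hv' hvv' => if_neg (hne v' hv' hvv'),
        Finset.sum_eq_single_of_mem v hv fun v' hv' hvv' => if_neg (hne v' hv' hvv'),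
        if_pos hvt, if_pos hvt, ← pow_mul, mul_comm, pow_mul]
      simp
    · push Not at h
      rw [bmat, Finset.sum_eq_zero fun v hv => if_neg (h v hv),
        Finset.sum_eq_zero fun v hv => if_neg (h v hv)]
      simp
  simp_rw [hsq]
  rw [Finset.sum_comm]
  suffices h : ∀ v ∈ s.1, (∑ t : Cell n c, if s.1.erase v = t.1 then (1 : ℤ) else 0) ≤ 1 by
    simpa [s.2] using Finset.sum_le_card_nsmul _ _ _ h
  intro v hv
  let t₀ : Cell n c := ⟨s.1.erase v, by rw [Finset.card_erase_of_mem hv, s.2]; rfl⟩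
  have : ∀ t : Cell n c, s.1.erase v = t.1 ↔ t₀ = t := fun t => by simp [t₀, Subtype.ext_iff]
  simp [this]

/-- Let `X` be a `d`-dimensional simplicial complex on `n` vertices, `d ≥ 2`
(here `d = c + 1`, the `(d-1)`-faces of `X` are `G` and the `d`-faces are `F`).
Then the torsion subgroup of `H_{d-1}(X; ℤ)` has order at most `√(d+1) ^ (n choose d)`. -/
theorem torsion_homology_le (n c : ℕ) (hd : 2 ≤ c + 1)
    (G : Finset (Cell n (c + 1))) (F : Finset (Cell n (c + 2)))
    (hclosed : ∀ f ∈ F, ∀ t : Cell n (c + 1), t.1 ⊆ f.1 → t ∈ G) :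
    (Nat.card ↥(Submodule.torsion ℤ (HomG ℤ n c G F)) : ℝ) ≤
      Real.sqrt ((c + 1 : ℕ) + 1) ^ (n.choose (c + 1)) := by
  have hcard : Fintype.card G ≤ n.choose (c + 1) := by
    refine (Fintype.card_coe G).trans_le ((Finset.card_le_univ G).trans_eq ?_)
    simp [Fintype.card_finset_len]
  let w : F → G → ℤ := fun f g => bmat ℤ n (c + 1) g.1 f.1
  have hw : ∀ f, ∑ g, w f g ^ 2 ≤ ((c + 2 : ℕ) : ℤ) := fun f => by
    refine le_trans ?_ (sum_sq_bmat_le n (c + 1) f.1)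
    rw [Finset.sum_coe_sort G fun g => bmat ℤ n (c + 1) g f.1 ^ 2]
    exact Finset.sum_le_univ_sum_of_nonneg fun _ => sq_nonneg _
  have hB : bdriesG ℤ n c G F = Submodule.span ℤ (Set.range w) := by
    rw [bdriesG, Matrix.range_mulVecLin]
    rfl
  have hle := card_torsion_quotient_le w (c + 2) (by omega) hw (cyclesG ℤ n c G)
  rw [← hB] at hle
  refine hle.trans ?_
  have hK : (((c + 1 : ℕ) : ℝ) + 1) = ((c + 2 : ℕ) : ℝ) := by push_cast; ring
  rw [hK]
  exact pow_le_pow_right₀ (Real.one_le_sqrt.mpr (by norm_cast; omega)) hcard
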